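/- Let $0 < a < b$, $s \in (0,1)$, $p, q > 1$ with $\frac{1}{p} + \frac{1}{q} = 1$, and let $M > 0$ satisfy $s(1-s)u^{s-2} \le M$ for all $u \in [a,b]$. Then for every $x \in [a,b]$: $\left| L_s^s(a,b) - x^s + s\,(x - A(a,b))\,x^{s-1} \right| \le \frac{3M}{(2p+1)^{1/p}} \left(\frac{2}{s+1}\right)^{1/q} \Big[ \frac{(b-a)^2}{24} + \frac{1}{2}\big(x - A(a,b)\big)^2 \Big]$. In particular, taking $x = A(a,b)$: $\left| L_s^s(a,b) - A(a,b)^s \right| \le \frac{M}{8(2p+1)^{1/p}} \left(\frac{2}{s+1}\right)^{1/q} (b-a)^2$. -/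

import Mathlib

open MeasureTheory Set intervalIntegral

/-!
Integrating the Taylor estimate `‖f t - f x - (t - x) • f' x‖ ≤ M / 2 * (t - x) ^ 2` over
`t ∈ [a, b]` gives the Ostrowski-type inequality with the constant `M`. Hölder's inequality is not
needed: its extra factor `3 / (2 * p + 1) ^ (1 / p) * (2 / (s + 1)) ^ (1 / q)` is at least `1`, by
Bernoulli's inequality `1 + 2 * p ≤ 3 ^ p` and because `s ≤ 1`.
-/

section Taylor

variable {E : Type*} [NormedAddCommGroup E] [NormedSpace ℝ E] {f f' : ℝ → E} {M x : ℝ}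

theorem norm_sub_sub_smul_deriv_le {S : Set ℝ} {t : ℝ} (hS : Convex ℝ S)
    (hf : ∀ y ∈ S, HasDerivWithinAt f (f' y) S y)
    (hf' : ∀ y ∈ S, ‖f' y - f' x‖ ≤ M * |y - x|) (hx : x ∈ S) (ht : t ∈ S) :
    ‖f t - f x - (t - x) • f' x‖ ≤ M / 2 * (t - x) ^ 2 := by
  let c : ℝ → ℝ := fun r => x + r * (t - x)
  let g : ℝ → E := fun r => f (c r) - f x - r • (t - x) • f' x
  have hc_mem : MapsTo c (Icc 0 1) S := fun r hr => hS.add_smul_sub_mem hx ht hr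
  have hc : ∀ r, HasDerivAt c (t - x) r := fun r =>
    (((hasDerivAt_id r).mul_const (t - x)).const_add x).congr_deriv (one_mul _)
  have hg : ∀ r ∈ Icc (0 : ℝ) 1,
      HasDerivWithinAt g ((t - x) • (f' (c r) - f' x)) (Icc 0 1) r := fun r hr => by
    have hline : HasDerivWithinAt (fun r : ℝ => r • (t - x) • f' x) ((t - x) • f' x)
        (Icc 0 1) r := by
      simpa using (hasDerivWithinAt_id r (Icc (0 : ℝ) 1)).smul_const ((t - x) • f' x)
    rw [smul_sub]
    exact (((hf _ (hc_mem hr)).scomp r (hc r).hasDerivWithinAt hc_mem).sub_const (f x)).sub hline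
  have hg_norm : ∀ r ∈ Ico (0 : ℝ) 1,
      ‖(t - x) • (f' (c r) - f' x)‖ ≤ M * (t - x) ^ 2 * r := fun r hr => by
    calc ‖(t - x) • (f' (c r) - f' x)‖ = |t - x| * ‖f' (c r) - f' x‖ := norm_smul _ _
      _ ≤ |t - x| * (M * |c r - x|) := by gcongr; exact hf' _ (hc_mem (Ico_subset_Icc_self hr))
      _ = M * |t - x| ^ 2 * r := by
        rw [add_sub_cancel_left, abs_mul, abs_of_nonneg hr.1]; ring
      _ = M * (t - x) ^ 2 * r := by rw [sq_abs]
  have hB : ∀ r, HasDerivAt (fun r : ℝ => M / 2 * (t - x) ^ 2 * r ^ 2) (M * (t - x) ^ 2 * r) r :=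
    fun r => ((hasDerivAt_pow 2 r).const_mul (M / 2 * (t - x) ^ 2)).congr_deriv (by ring)
  have h := image_norm_le_of_norm_deriv_right_le_deriv_boundary
    (fun r hr => (hg r hr).continuousWithinAt)
    (fun r hr => (hg r (Ico_subset_Icc_self hr)).mono_of_mem_nhdsWithin (Icc_mem_nhdsGE_of_mem hr))
    (by simp [g, c]) hB hg_norm (right_mem_Icc.2 zero_le_one)
  simpa [g, c] using h

theorem integral_sub_sq (a b x : ℝ) :
    ∫ t in a..b, (t - x) ^ 2 = (b - a) * ((b - a) ^ 2 / 12 + (x - (a + b) / 2) ^ 2) := by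
  rw [integral_comp_sub_right (fun t => t ^ 2), integral_pow]
  norm_num
  ring

theorem intervalAverage_sub_sub_smul [CompleteSpace E] {a b : ℝ} (hab : a ≠ b)
    (hf : IntervalIntegrable f volume a b) (x : ℝ) (c v : E) :
    ⨍ t in a..b, (f t - c - (t - x) • v) = (⨍ t in a..b, f t) - c + (x - (a + b) / 2) • v := by
  have hba : b - a ≠ 0 := sub_ne_zero.2 hab.symm
  have hmean : ∫ t in a..b, (t - x) = (b - a) * ((a + b) / 2 - x) := by
    rw [integral_comp_sub_right (fun t => t), integral_id]
    ring
  have hint : ∫ t in a..b, (f t - c - (t - x) • v)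
      = (∫ t in a..b, f t) - (b - a) • c - (b - a) • ((a + b) / 2 - x) • v := by
    rw [integral_sub (hf.sub intervalIntegrable_const)
        (Continuous.intervalIntegrable (by fun_prop) a b),
      integral_sub hf intervalIntegrable_const, intervalIntegral.integral_const,
      intervalIntegral.integral_smul_const, hmean, mul_smul]
  rw [interval_average_eq, interval_average_eq, hint, smul_sub, smul_sub, inv_smul_smul₀ hba,
    inv_smul_smul₀ hba, ← neg_sub x, neg_smul, sub_neg_eq_add]

theorem norm_intervalAverage_sub_add_smul_deriv_le [CompleteSpace E] {a b : ℝ} (hab : a < b)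
    (hf : ∀ y ∈ Icc a b, HasDerivWithinAt f (f' y) (Icc a b) y)
    (hf' : ∀ y ∈ Icc a b, ‖f' y - f' x‖ ≤ M * |y - x|) (hx : x ∈ Icc a b) :
    ‖(⨍ t in a..b, f t) - f x + (x - (a + b) / 2) • f' x‖
      ≤ M * ((b - a) ^ 2 / 24 + (1 / 2) * (x - (a + b) / 2) ^ 2) := by
  have hba : 0 < b - a := sub_pos.2 hab
  have hf_int : IntervalIntegrable f volume a b :=
    ContinuousOn.intervalIntegrable_of_Icc hab.le fun y hy => (hf y hy).continuousWithinAt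
  have hrem_le : ‖∫ t in a..b, (f t - f x - (t - x) • f' x)‖
      ≤ ∫ t in a..b, M / 2 * (t - x) ^ 2 :=
    norm_integral_le_of_norm_le hab.le
      (.of_forall fun t ht =>
        norm_sub_sub_smul_deriv_le (convex_Icc a b) hf hf' hx (Ioc_subset_Icc_self ht))
      (Continuous.intervalIntegrable (by fun_prop) a b)
  calc ‖(⨍ t in a..b, f t) - f x + (x - (a + b) / 2) • f' x‖
      = (b - a)⁻¹ * ‖∫ t in a..b, (f t - f x - (t - x) • f' x)‖ := by
        rw [← intervalAverage_sub_sub_smul hab.ne hf_int, interval_average_eq,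
          norm_smul_of_nonneg (inv_nonneg.2 hba.le)]
    _ ≤ (b - a)⁻¹ * ∫ t in a..b, M / 2 * (t - x) ^ 2 := by gcongr
    _ = M * ((b - a) ^ 2 / 24 + (1 / 2) * (x - (a + b) / 2) ^ 2) := by
        rw [intervalIntegral.integral_const_mul, integral_sub_sq]
        field_simp
        ring

end Taylor

section Rpow

variable {a b s M x y : ℝ}

theorem intervalAverage_rpow (ha : 0 < a) (hb : 0 < b) (hs : s ≠ -1) :
    ⨍ t in a..b, t ^ s = (b ^ (s + 1) - a ^ (s + 1)) / ((s + 1) * (b - a)) := by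
  rw [interval_average_eq_div,
    integral_rpow (.inr ⟨hs, notMem_uIcc_of_lt ha hb⟩), div_div]

theorem abs_mul_rpow_sub_one_sub_le (ha : 0 < a)
    (hM : ∀ u ∈ Icc a b, |s * (1 - s)| * u ^ (s - 2) ≤ M) (hx : x ∈ Icc a b)
    (hy : y ∈ Icc a b) : |s * y ^ (s - 1) - s * x ^ (s - 1)| ≤ M * |y - x| := by
  have hderiv : ∀ u ∈ Icc a b, HasDerivWithinAt (fun u : ℝ => s * u ^ (s - 1))
      (s * ((s - 1) * u ^ (s - 2))) (Icc a b) u := fun u hu => by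
    have h := Real.hasDerivAt_rpow_const (p := s - 1) (.inl (ha.trans_le hu.1).ne')
    rw [sub_sub, one_add_one_eq_two] at h
    exact (h.const_mul s).hasDerivWithinAt
  have hderiv_le : ∀ u ∈ Icc a b, ‖s * ((s - 1) * u ^ (s - 2))‖ ≤ M := fun u hu => by
    rw [← mul_assoc, norm_mul, Real.norm_eq_abs, abs_mul, abs_sub_comm, ← abs_mul,
      Real.norm_of_nonneg (Real.rpow_nonneg (ha.le.trans hu.1) _)]
    exact hM u hu
  exact (convex_Icc a b).norm_image_sub_le_of_norm_hasDerivWithin_le hderiv hderiv_le hx hy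

theorem abs_intervalAverage_rpow_sub_add_le (ha : 0 < a) (hab : a < b)
    (hM : ∀ u ∈ Icc a b, |s * (1 - s)| * u ^ (s - 2) ≤ M) (hx : x ∈ Icc a b) :
    |(⨍ t in a..b, t ^ s) - x ^ s + s * (x - (a + b) / 2) * x ^ (s - 1)|
      ≤ M * ((b - a) ^ 2 / 24 + (1 / 2) * (x - (a + b) / 2) ^ 2) := by
  have hderiv : ∀ y ∈ Icc a b,
      HasDerivWithinAt (fun t : ℝ => t ^ s) (s * y ^ (s - 1)) (Icc a b) y := fun y hy =>
    (Real.hasDerivAt_rpow_const (.inl (ha.trans_le hy.1).ne')).hasDerivWithinAt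
  have h := norm_intervalAverage_sub_add_smul_deriv_le hab hderiv
    (fun y hy => abs_mul_rpow_sub_one_sub_le ha hM hx hy) hx
  rwa [smul_eq_mul, mul_left_comm, ← mul_assoc] at h

end Rpow

theorem one_add_mul_rpow_one_div_le_one_add {p c : ℝ} (hp : 1 ≤ p) (hc : 0 ≤ 1 + p * c) :
    (1 + p * c) ^ (1 / p) ≤ 1 + c := by
  have hp₀ : 0 < p := zero_lt_one.trans_le hp
  have hc₁ : -1 ≤ c := by nlinarith
  rw [one_div, Real.rpow_inv_le_iff_of_pos hc (by linarith) hp₀]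
  exact one_add_mul_self_le_rpow_one_add hc₁ hp

theorem one_le_three_div_rpow_mul_rpow {p q s : ℝ} (hp : 1 ≤ p) (hq : 0 < q)
    (hs : s ∈ Ioc (-1) 1) : 1 ≤ 3 / (2 * p + 1) ^ (1 / p) * (2 / (s + 1)) ^ (1 / q) := by
  have hp_le : (2 * p + 1) ^ (1 / p) ≤ 3 := by
    calc (2 * p + 1) ^ (1 / p) = (1 + p * 2) ^ (1 / p) := by rw [add_comm, mul_comm]
      _ ≤ 1 + 2 := one_add_mul_rpow_one_div_le_one_add hp (by positivity)
      _ = 3 := by norm_num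
  have hs_le : 1 ≤ 2 / (s + 1) := by
    rw [one_le_div (by linarith [hs.1])]
    linarith [hs.2]
  exact one_le_mul_of_one_le_of_one_le
    ((one_le_div (by positivity)).2 hp_le) (Real.one_le_rpow hs_le (by positivity))

theorem stmt16_general {a b s M p q : ℝ} (ha : 0 < a) (hab : a < b) (hs : s ∈ Ioc (-1) 1)
    (hM : ∀ u ∈ Icc a b, |s * (1 - s)| * u ^ (s - 2) ≤ M) (hp : 1 ≤ p) (hq : 0 < q) :
    (∀ x ∈ Icc a b,
        |(b ^ (s + 1) - a ^ (s + 1)) / ((s + 1) * (b - a)) - x ^ s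
            + s * (x - (a + b) / 2) * x ^ (s - 1)|
          ≤ 3 * M / (2 * p + 1) ^ (1 / p) * (2 / (s + 1)) ^ (1 / q) *
              ((b - a) ^ 2 / 24 + (1 / 2) * (x - (a + b) / 2) ^ 2))
      ∧ |(b ^ (s + 1) - a ^ (s + 1)) / ((s + 1) * (b - a)) - ((a + b) / 2) ^ s|
          ≤ M / (8 * (2 * p + 1) ^ (1 / p)) * (2 / (s + 1)) ^ (1 / q) * (b - a) ^ 2 := by
  have hM₀ : 0 ≤ M :=
    (mul_nonneg (abs_nonneg _) (Real.rpow_nonneg ha.le _)).trans (hM a (left_mem_Icc.2 hab.le))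
  have hM_le : M ≤ 3 * M / (2 * p + 1) ^ (1 / p) * (2 / (s + 1)) ^ (1 / q) :=
    (le_mul_of_one_le_right hM₀ (one_le_three_div_rpow_mul_rpow hp hq hs)).trans_eq (by ring)
  rw [← intervalAverage_rpow ha (ha.trans hab) hs.1.ne']
  have hbound := fun x (hx : x ∈ Icc a b) =>
    (abs_intervalAverage_rpow_sub_add_le ha hab hM hx).trans
      (mul_le_mul_of_nonneg_right hM_le (by positivity))
  refine ⟨hbound, ?_⟩
  have hmid := hbound ((a + b) / 2) ⟨by linarith, by linarith⟩
  rw [sub_self, mul_zero, zero_mul, add_zero] at hmid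
  exact hmid.trans_eq (by ring)

theorem stmt16 (a b : ℝ) (ha : 0 < a) (hab : a < b) (s : ℝ) (hs : s ∈ Set.Ioo (0:ℝ) 1)
    (M : ℝ) (hM : 0 < M) (hbd : ∀ u ∈ Set.Icc a b, s * (1 - s) * u ^ (s - 2) ≤ M)
    (p q : ℝ) (hp : 1 < p) (hq : 1 < q) (hpq : 1 / p + 1 / q = 1) :
    (∀ x ∈ Set.Icc a b,
        |(b ^ (s + 1) - a ^ (s + 1)) / ((s + 1) * (b - a)) - x ^ s + s * (x - ((a + b) / 2)) * x ^ (s - 1)|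
          ≤ 3 * M / (2 * p + 1) ^ (1 / p) * (2 / (s + 1)) ^ (1 / q) *
              ((b - a) ^ 2 / 24 + (1 / 2) * (x - ((a + b) / 2)) ^ 2))
      ∧ |(b ^ (s + 1) - a ^ (s + 1)) / ((s + 1) * (b - a)) - ((a + b) / 2) ^ s|
          ≤ M / (8 * (2 * p + 1) ^ (1 / p)) * (2 / (s + 1)) ^ (1 / q) * (b - a) ^ 2 := by
  rw [← abs_of_pos (mul_pos hs.1 (sub_pos.2 hs.2))] at hbd
  exact stmt16_general ha hab ⟨by linarith [hs.1], hs.2.le⟩ hbd hp.le (by linarith)
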